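/- Let G be a parity game, let P be one of the two players, let D ⊆ V be a P-dominion in G, and let X ⊆ V be any set of vertices. Then D \ Attr_P(X, G) is a P-dominion in the subgame G \ Attr_P(X, G) (in particular, every vertex of D \ Attr_P(X, G) has a successor in V \ Attr_P(X, G), so this subgame is well defined on the vertices of D \ Attr_P(X, G)). -/

import Mathlib

/-! A `P`-vertex outside `Attr_P(X)` has no edge into the attractor, since such an edge would
put it inside. Hence a strategy of `P` that stays in `D` can never move from `D \ Attr_P(X)`
into the attractor, and the very same strategy witnesses that `D \ Attr_P(X)` is a dominion: each
play inside `D \ Attr_P(X)` is in particular a play inside `D`. Opponent edges into the attractor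
are absent from the subgame, and an opponent vertex outside the attractor keeps some successor
outside it. -/



/-- The two players of a parity game. -/
inductive Player where
  | even : Player
  | odd : Player
deriving DecidableEq

/-- The opponent of a player. -/
def Player.opp : Player → Player
  | even => odd
  | odd => even

/-- A natural number has the parity of the given player. -/
def Player.matchesPriority : Player → ℕ → Prop
  | even => fun p => Even p
  | odd => fun p => Odd p

/-- A parity game on a vertex type `V`: an ownership function, an edge relation in which
every vertex has at least one successor, and a priority function. -/
structure ParityGame (V : Type*) where
  owner : V → Player
  edge : V → V → Prop
  priority : V → ℕ
  succ_nonempty : ∀ v, ∃ w, edge v w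

namespace ParityGame

variable {V : Type*} (G : ParityGame V)

/-- A play is an infinite sequence of vertices following edges. -/
def IsPlay (π : ℕ → V) : Prop := ∀ i, G.edge (π i) (π (i + 1))

/-- Priority `p` occurs infinitely often along the play `π`. -/
def InfOften (π : ℕ → V) (p : ℕ) : Prop := ∀ N, ∃ i, N ≤ i ∧ G.priority (π i) = p

/-- A play is winning for a player if the highest priority occurring infinitely often
along it has that player's parity. -/
def WinsPlay (P : Player) (π : ℕ → V) : Prop :=
  ∃ p, G.InfOften π p ∧ (∀ q, G.InfOften π q → q ≤ p) ∧ P.matchesPriority p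

/-- A play `π` agrees with the strategy `σ` of player `P` (a strategy maps a history
together with the current vertex to the next vertex). -/
def Agrees (P : Player) (σ : List V → V → V) (π : ℕ → V) : Prop :=
  ∀ i, G.owner (π i) = P → π (i + 1) = σ (List.ofFn fun j : Fin i => π j) (π i)

/-- `σ` is a valid strategy for player `P`: at `P`'s vertices it prescribes a successor. -/
def ValidFor (P : Player) (σ : List V → V → V) : Prop :=
  ∀ hist v, G.owner v = P → G.edge v (σ hist v)

/-- Player `P` has a winning strategy from vertex `v`. -/
def WinsFrom (P : Player) (v : V) : Prop :=
  ∃ σ, G.ValidFor P σ ∧ ∀ π, π 0 = v → G.IsPlay π → G.Agrees P σ π → G.WinsPlay P π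

/-- The winning region of player `P`. -/
def winningRegion (P : Player) : Set V := {v | G.WinsFrom P v}

/-- Player `P` has a winning strategy from `v` in the subgame induced by the set `D`:
a strategy that at `P`'s vertices of `D` prescribes successors inside `D` and wins
every play that starts at `v`, stays in `D` and agrees with it. -/
def WinsWithinFrom (P : Player) (D : Set V) (v : V) : Prop :=
  ∃ σ : List V → V → V,
    (∀ hist w, w ∈ D → G.owner w = P → σ hist w ∈ D ∧ G.edge w (σ hist w)) ∧
    ∀ π, π 0 = v → G.IsPlay π → (∀ i, π i ∈ D) → G.Agrees P σ π → G.WinsPlay P π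

/-- `D` is a dominion for player `P` in the subgame of `G` induced by the vertex set `U`:
`D ⊆ U`, every `P`-vertex of `D` has a successor in `D`, every opponent vertex of `D`
has all of its successors (within the subgame) in `D`, and `P` wins from every vertex
of `D` in the subgame induced by `D`. -/
def IsDominionIn (P : Player) (U D : Set V) : Prop :=
  D ⊆ U ∧
  (∀ v ∈ D, G.owner v = P → ∃ w ∈ D, G.edge v w) ∧
  (∀ v ∈ D, G.owner v ≠ P → ∀ w ∈ U, G.edge v w → w ∈ D) ∧
  ∀ v ∈ D, G.WinsWithinFrom P D v

/-- `D` is a dominion for player `P` in `G`. -/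
def IsDominion (P : Player) (D : Set V) : Prop := G.IsDominionIn P Set.univ D

/-- The attractor for player `P` of the set `X`, computed in the subgame of `G` induced
by the vertex set `U`: the least set containing `X` such that a `P`-vertex with some
successor in it belongs to it, and an opponent vertex all of whose successors (within
the subgame) are in it belongs to it. -/
inductive AttrIn (P : Player) (U X : Set V) : V → Prop
  | base {v} : v ∈ X → AttrIn P U X v
  | player {v w} : v ∈ U → G.owner v = P → w ∈ U → G.edge v w → AttrIn P U X w →
      AttrIn P U X v
  | opponent {v} : v ∈ U → G.owner v ≠ P → (∀ w ∈ U, G.edge v w → AttrIn P U X w) →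
      AttrIn P U X v

/-- The attractor, within subgame `U`, as a set. -/
def attrIn (P : Player) (U X : Set V) : Set V := {v | G.AttrIn P U X v}

/-- The attractor `Attr_P(X, G)` for player `P` of the set `X` in the whole game `G`. -/
def attractor (P : Player) (X : Set V) : Set V := G.attrIn P Set.univ X

/-- `T` is a trap for player `P`: every `P`-vertex of `T` has all of its successors in
`T`, and every opponent vertex of `T` has at least one successor in `T`. -/
def IsTrap (P : Player) (T : Set V) : Prop :=
  (∀ v ∈ T, G.owner v = P → ∀ w, G.edge v w → w ∈ T) ∧
  (∀ v ∈ T, G.owner v ≠ P → ∃ w ∈ T, G.edge v w)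

end ParityGame

namespace ParityGame

variable {V : Type*} {G : ParityGame V} {P : Player} {X : Set V} {v w : V}

theorem notMem_attractor_of_edge (hv : v ∉ G.attractor P X) (ho : G.owner v = P)
    (he : G.edge v w) : w ∉ G.attractor P X :=
  fun hw => hv (AttrIn.player (Set.mem_univ v) ho (Set.mem_univ w) he hw)

theorem exists_edge_notMem_attractor (hv : v ∉ G.attractor P X) :
    ∃ w ∈ (G.attractor P X)ᶜ, G.edge v w := by
  by_cases ho : G.owner v = P
  · obtain ⟨w, he⟩ := G.succ_nonempty v
    exact ⟨w, notMem_attractor_of_edge hv ho he, he⟩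
  · by_contra! h
    exact hv (AttrIn.opponent (Set.mem_univ v) ho fun w _ he =>
      not_not.1 fun hw => h w hw he)

end ParityGame

/-- If `D` is a dominion for player `P` in `G`, then for every set `X`,
`D \\ Attr_P(X, G)` is a dominion for `P` in the subgame `G \\ Attr_P(X, G)`; in
particular every vertex of `D \\ Attr_P(X, G)` has a successor outside `Attr_P(X, G)`. -/
theorem dominion_diff_own_attractor {V : Type*} [Finite V] (G : ParityGame V)
    (P : Player) (D X : Set V) (hD : G.IsDominion P D) :
    (∀ v ∈ D \ G.attractor P X, ∃ w ∈ (G.attractor P X)ᶜ, G.edge v w) ∧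
    G.IsDominionIn P (G.attractor P X)ᶜ (D \ G.attractor P X) := by
  refine ⟨fun v hv => ParityGame.exists_edge_notMem_attractor hv.2, fun v hv => hv.2, ?_, ?_, ?_⟩
  · intro v hv ho
    obtain ⟨w, hw, he⟩ := hD.2.1 v hv.1 ho
    exact ⟨w, ⟨hw, ParityGame.notMem_attractor_of_edge hv.2 ho he⟩, he⟩
  · intro v hv ho w hw he
    exact ⟨hD.2.2.1 v hv.1 ho w (Set.mem_univ w) he, hw⟩
  · intro v hv
    obtain ⟨σ, hσ, hwin⟩ := hD.2.2.2 v hv.1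
    refine ⟨σ, fun hist w hw ho => ?_, fun π h0 hπ hin hag =>
      hwin π h0 hπ (fun i => (hin i).1) hag⟩
    obtain ⟨hmem, he⟩ := hσ hist w hw.1 ho
    exact ⟨⟨hmem, ParityGame.notMem_attractor_of_edge hw.2 ho he⟩, he⟩
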